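/- Let N ≥ 2 and 0 ≤ L < N, let b₁, …, b_{N−L} be unit vectors in ℝ³ with Π_i = I₃ − b_i·b_iᵀ for i ≤ N−L, and set Π_i = 0 (the zero 3×3 matrix) for N−L < i ≤ N. Let Π = diag(Π₁, …, Π_N). Let L be an N×N real symmetric positive semidefinite matrix with L·𝟙 = 0 and vᵀLv ≥ λ₂‖v‖² for every v ∈ ℝ^N with 𝟙ᵀv = 0, where λ₂ > 0. Let μ > 0 and γ ∈ (0,1) satisfy: (1/N)·Σ_{i=1}^{N−L} Π_i − (μ + γ)·I₃ is positive definite, and α > (μ + 1/γ − 1)/λ₂. Then Π + α·(L ⊗ I₃) − μ·I_{3N} is positive definite. -/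

import Mathlib

/-!
Write `x i = m + e i`, where `m` is the average of the blocks `x i` of `x`, so that `∑ i, e i = 0`.
Each measurement matrix `P` satisfies `0 ≤ P ≤ 1`, hence by Young's inequality
`⟨m + e, P (m + e)⟩ ≥ ⟨m, P m⟩ - γ ‖m‖² - (1 / γ - 1) ‖e‖²` (`young_of_form`).
The Laplacian does not see `m`, and on each coordinate of `e` the Fiedler bound applies. Summing,
the form is at least
`N ⟨m, (S - (μ + γ)) m⟩ + (α λ₂ - μ - 1 / γ + 1) ∑ i, ‖e i‖²`, with `S` the average of the
measurement matrices. Both terms are nonnegative, and one is positive because `m` and `e` do not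
both vanish.
-/

open Matrix
open scoped Kronecker

/-- Young's inequality for the form of `I - b bᵀ`, in the shape needed here. The first step
is positive semidefiniteness at `γ m + e`, the second is `I - b bᵀ ≤ I`. -/
lemma young_of_form (b m e : Fin 3 → ℝ) (hb : ∑ l, (b l) ^ 2 = 1) (γ : ℝ) (hγ0 : 0 < γ)
    (hγ1 : γ < 1) :
    m ⬝ᵥ ((1 - vecMulVec b b) *ᵥ m) - γ * ∑ l, m l ^ 2 - (1 / γ - 1) * ∑ l, e l ^ 2
      ≤ (m + e) ⬝ᵥ ((1 - vecMulVec b b) *ᵥ (m + e)) := by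
  have form : ∀ x : Fin 3 → ℝ, x ⬝ᵥ ((1 - vecMulVec b b) *ᵥ x)
      = ∑ l, x l ^ 2 - (∑ l, b l * x l) ^ 2 := by
    intro x
    rw [sub_mulVec, one_mulVec, dotProduct_sub]
    simp only [dotProduct, mulVec, vecMulVec_apply, Fin.sum_univ_three]
    ring
  have hpsd : (∑ l, b l * (γ * m l + e l)) ^ 2 ≤ ∑ l, (γ * m l + e l) ^ 2 := by
    have h := Finset.sum_mul_sq_le_sq_mul_sq Finset.univ b (fun l => γ * m l + e l)
    rwa [hb, one_mul] at h
  have hγ : 0 ≤ 1 / γ - 1 := by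
    rw [sub_nonneg, le_div_iff₀ hγ0]
    linarith
  have h1 := mul_nonneg (one_div_pos.2 hγ0).le (sub_nonneg.2 hpsd)
  have h2 := mul_nonneg hγ0.le (sq_nonneg (∑ l, b l * m l))
  have h3 := mul_nonneg hγ (sq_nonneg (∑ l, b l * e l))
  obtain ⟨r, hr⟩ : ∃ r, r = 1 / γ := ⟨_, rfl⟩
  have hrγ : r * γ = 1 := by rw [hr]; field_simp
  rw [form, form]
  rw [← hr] at h1 h3 ⊢
  have key : r * (∑ l, (γ * m l + e l) ^ 2 - (∑ l, b l * (γ * m l + e l)) ^ 2)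
      = γ * (∑ l, m l ^ 2 - (∑ l, b l * m l) ^ 2)
        + 2 * (∑ l, m l * e l - (∑ l, b l * m l) * (∑ l, b l * e l))
        + r * (∑ l, e l ^ 2 - (∑ l, b l * e l) ^ 2) := by
    simp only [Fin.sum_univ_three]
    linear_combination
      (γ * (m 0 ^ 2 + m 1 ^ 2 + m 2 ^ 2 - (b 0 * m 0 + b 1 * m 1 + b 2 * m 2) ^ 2)
        + 2 * (m 0 * e 0 + m 1 * e 1 + m 2 * e 2
          - (b 0 * m 0 + b 1 * m 1 + b 2 * m 2) * (b 0 * e 0 + b 1 * e 1 + b 2 * e 2))) * hrγ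
  rw [key] at h1
  simp only [Fin.sum_univ_three, Pi.add_apply] at h1 h2 h3 ⊢
  linarith

/-- The form of a symmetric matrix killing constants is invariant under adding a constant. -/
lemma form_sub_const {N : ℕ} (A : Matrix (Fin N) (Fin N) ℝ) (hA : A.IsHermitian)
    (h1 : A *ᵥ (fun _ => (1 : ℝ)) = 0) (v : Fin N → ℝ) (c : ℝ) :
    (fun i => v i - c) ⬝ᵥ (A *ᵥ (fun i => v i - c)) = v ⬝ᵥ (A *ᵥ v) := by
  have hv : (fun i => v i - c) = v - c • (fun _ => (1 : ℝ)) := by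
    ext i; simp
  have ht : Aᵀ = A := by simpa [IsHermitian] using hA
  have h2 : (fun _ => (1 : ℝ)) ⬝ᵥ (A *ᵥ v) = 0 := by
    rw [dotProduct_mulVec, ← mulVec_transpose, ht, h1, zero_dotProduct]
  rw [hv, mulVec_sub, mulVec_smul, h1, smul_zero, sub_zero, sub_dotProduct, smul_dotProduct, h2,
    smul_zero, sub_zero]

lemma form_blockDiag {N : ℕ} (Pr : Fin N → Matrix (Fin 3) (Fin 3) ℝ)
    (Prb : Matrix (Fin N × Fin 3) (Fin N × Fin 3) ℝ)
    (hPrb : ∀ p q : Fin N × Fin 3, Prb p q = if p.1 = q.1 then Pr p.1 p.2 q.2 else 0)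
    (x : Fin N × Fin 3 → ℝ) :
    x ⬝ᵥ (Prb *ᵥ x) = ∑ i, (fun l => x (i, l)) ⬝ᵥ (Pr i *ᵥ (fun l => x (i, l))) := by
  simp only [dotProduct, mulVec, hPrb, Fintype.sum_prod_type]
  refine Finset.sum_congr rfl fun i _ => Finset.sum_congr rfl fun l _ => ?_
  congr 1
  rw [Finset.sum_eq_single i]
  · simp
  · intro j _ hj
    simp [hj.symm]
  · simp

lemma form_kronecker_one {N : ℕ} (A : Matrix (Fin N) (Fin N) ℝ) (x : Fin N × Fin 3 → ℝ) :
    x ⬝ᵥ ((A ⊗ₖ (1 : Matrix (Fin 3) (Fin 3) ℝ)) *ᵥ x)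
      = ∑ l, (fun i => x (i, l)) ⬝ᵥ (A *ᵥ (fun i => x (i, l))) := by
  simp only [dotProduct, mulVec, kroneckerMap_apply, Fintype.sum_prod_type, one_apply]
  rw [Finset.sum_comm]
  simp

/-- measurement-loss robustness, Section 5.2 of the paper: when the
last `L` of the `N` agents have no bearing measurements (their measurement matrices set
to the zero matrix), the key matrix inequality still holds provided the spatial
excitation condition is met by the remaining `N − L` agents alone, with the
consensus-gain condition unchanged. -/
theorem bearing_consensus_posdef_measurement_loss (N L : ℕ) (hN : 2 ≤ N) (hL : L < N)
    (b : Fin N → Fin 3 → ℝ) (hb : ∀ i : Fin N, (i : ℕ) < N - L → ∑ l, (b i l) ^ 2 = 1)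
    (Pr : Fin N → Matrix (Fin 3) (Fin 3) ℝ)
    (hPr : ∀ i : Fin N, Pr i =
      if (i : ℕ) < N - L then 1 - Matrix.vecMulVec (b i) (b i) else 0)
    (Prb : Matrix (Fin N × Fin 3) (Fin N × Fin 3) ℝ)
    (hPrb : ∀ p q : Fin N × Fin 3, Prb p q = if p.1 = q.1 then Pr p.1 p.2 q.2 else 0)
    (Lm : Matrix (Fin N) (Fin N) ℝ) (hLsymm : Lm.IsHermitian) (hLpsd : Lm.PosSemidef)
    (hL1 : Lm *ᵥ (fun _ => (1 : ℝ)) = 0)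
    (lam2 : ℝ) (hlam2 : 0 < lam2)
    (hfiedler : ∀ v : Fin N → ℝ, (∑ i, v i) = 0 →
      lam2 * (∑ i, v i ^ 2) ≤ v ⬝ᵥ (Lm *ᵥ v))
    (μ γ : ℝ) (hμ : 0 < μ) (hγ0 : 0 < γ) (hγ1 : γ < 1)
    (hexc : (((N : ℝ))⁻¹ • (∑ i, Pr i) - (μ + γ) • (1 : Matrix (Fin 3) (Fin 3) ℝ)).PosDef)
    (α : ℝ) (hα : (μ + 1 / γ - 1) / lam2 < α) :
    (Prb + α • (Lm ⊗ₖ (1 : Matrix (Fin 3) (Fin 3) ℝ))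
      - μ • (1 : Matrix (Fin N × Fin 3) (Fin N × Fin 3) ℝ)).PosDef := by
  have hN0 : (0 : ℝ) < N := by exact_mod_cast (by omega : 0 < N)
  have hγ : 0 < 1 / γ - 1 := by
    rw [sub_pos, lt_div_iff₀ hγ0]
    linarith
  have hα0 : 0 < α := lt_trans (div_pos (by linarith) hlam2) hα
  have hgap : 0 < α * lam2 - μ - (1 / γ - 1) := by
    rw [div_lt_iff₀ hlam2] at hα
    linarith
  have hPrsymm : ∀ i k l, Pr i k l = Pr i l k := by
    intro i k l
    rw [hPr]
    split_ifs
    · simp [Matrix.sub_apply, vecMulVec_apply, one_apply, mul_comm, eq_comm]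
    · simp
  have hherm : (Prb + α • (Lm ⊗ₖ (1 : Matrix (Fin 3) (Fin 3) ℝ))
      - μ • (1 : Matrix (Fin N × Fin 3) (Fin N × Fin 3) ℝ)).IsHermitian := by
    ext p q
    have hLs : Lm q.1 p.1 = Lm p.1 q.1 := by simpa using hLsymm.apply p.1 q.1
    by_cases h : p.1 = q.1
    · simp [hPrb, one_apply, h, hPrsymm q.1 q.2 p.2, eq_comm]
    · simp [hPrb, one_apply, hLs, h, Ne.symm h, eq_comm]
  refine PosDef.of_dotProduct_mulVec_pos hherm fun x hx => ?_
  rw [star_trivial, sub_mulVec, add_mulVec, smul_mulVec, smul_mulVec, one_mulVec, dotProduct_sub,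
    dotProduct_add, dotProduct_smul, dotProduct_smul, form_blockDiag Pr Prb hPrb,
    form_kronecker_one, smul_eq_mul, smul_eq_mul]
  obtain ⟨m, hm⟩ : ∃ m : Fin 3 → ℝ, ∀ l, m l = (N : ℝ)⁻¹ * ∑ i, x (i, l) := ⟨_, fun _ => rfl⟩
  obtain ⟨e, he⟩ : ∃ e : Fin N → Fin 3 → ℝ, ∀ i l, e i l = x (i, l) - m l :=
    ⟨_, fun _ _ => rfl⟩
  have he0 : ∀ l, ∑ i, e i l = 0 := by
    intro l
    simp only [he, Finset.sum_sub_distrib, Finset.sum_const, Finset.card_univ, Fintype.card_fin,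
      nsmul_eq_mul, hm]
    field_simp
    ring
  have hxme : ∀ i, (fun l => x (i, l)) = m + e i := by
    intro i
    ext l
    simp [he]
  set M := ∑ l, m l ^ 2 with hM
  set E := ∑ i, ∑ l, e i l ^ 2 with hE
  have hE0 : 0 ≤ E := by positivity
  have hnorm : x ⬝ᵥ x = N * M + E := by
    have hcross : ∑ i, ∑ l, m l * e i l = 0 := by
      rw [Finset.sum_comm]
      simp [← Finset.mul_sum, he0]
    have hx2 : x ⬝ᵥ x = ∑ i, ∑ l, (m l ^ 2 + 2 * (m l * e i l) + e i l ^ 2) := by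
      simp only [dotProduct, Fintype.sum_prod_type]
      refine Finset.sum_congr rfl fun i _ => Finset.sum_congr rfl fun l _ => ?_
      rw [he]
      ring
    rw [hx2]
    simp only [Finset.sum_add_distrib, ← Finset.mul_sum, hcross]
    simp [hM, hE]
  have hlap : lam2 * E ≤ ∑ l, (fun i => x (i, l)) ⬝ᵥ (Lm *ᵥ (fun i => x (i, l))) := by
    rw [hE, Finset.sum_comm, Finset.mul_sum]
    refine Finset.sum_le_sum fun l _ => ?_
    have h := hfiedler (fun i => e i l) (he0 l)
    have h' := form_sub_const Lm hLsymm hL1 (fun i => x (i, l)) (m l)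
    simp only [he] at h ⊢
    rwa [h'] at h
  have hmeas : (∑ i, m ⬝ᵥ (Pr i *ᵥ m)) - N * (γ * M) - (1 / γ - 1) * E
      ≤ ∑ i, (fun l => x (i, l)) ⬝ᵥ (Pr i *ᵥ (fun l => x (i, l))) := by
    have hsum : (∑ i, m ⬝ᵥ (Pr i *ᵥ m)) - N * (γ * M) - (1 / γ - 1) * E
        = ∑ i, (m ⬝ᵥ (Pr i *ᵥ m) - γ * M - (1 / γ - 1) * ∑ l, e i l ^ 2) := by
      simp [hE, Finset.sum_sub_distrib, Finset.mul_sum]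
    rw [hsum]
    refine Finset.sum_le_sum fun i _ => ?_
    rw [hxme i, hPr i]
    split_ifs with hi
    · exact young_of_form (b i) m (e i) (hb i hi) γ hγ0 hγ1
    · have h1 : 0 ≤ γ * M := by positivity
      have h2 : 0 ≤ (1 / γ - 1) * ∑ l, e i l ^ 2 := mul_nonneg hγ.le (by positivity)
      simp only [zero_mulVec, dotProduct_zero]
      linarith
  have hS : m ⬝ᵥ (((N : ℝ)⁻¹ • (∑ i, Pr i)
      - (μ + γ) • (1 : Matrix (Fin 3) (Fin 3) ℝ)) *ᵥ m)
      = (N : ℝ)⁻¹ * (∑ i, m ⬝ᵥ (Pr i *ᵥ m)) - (μ + γ) * M := by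
    have hmm : m ⬝ᵥ m = M := by simp [dotProduct, hM, sq]
    rw [sub_mulVec, smul_mulVec, smul_mulVec, one_mulVec, dotProduct_sub, dotProduct_smul,
      dotProduct_smul, sum_mulVec, dotProduct_sum, hmm, smul_eq_mul, smul_eq_mul]
  have hαlap := mul_le_mul_of_nonneg_left hlap hα0.le
  rw [hnorm]
  by_cases hm0 : m = 0
  · -- The average vanishes, so the deviation part carries all of `x`.
    have hM0 : M = 0 := by simp [hM, hm0]
    have hEpos : 0 < E := by
      have hxx : 0 < x ⬝ᵥ x := by simpa using dotProduct_star_self_pos_iff.2 hx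
      rwa [hnorm, hM0, mul_zero, zero_add] at hxx
    have hQ : ∑ i, m ⬝ᵥ (Pr i *ᵥ m) = 0 := by simp [hm0]
    rw [hQ, hM0] at hmeas
    rw [hM0]
    nlinarith [mul_pos hgap hEpos]
  · have hpos := hexc.dotProduct_mulVec_pos hm0
    rw [star_trivial, hS] at hpos
    have hpos' : 0 < (∑ i, m ⬝ᵥ (Pr i *ᵥ m)) - N * ((μ + γ) * M) := by
      have h := mul_pos hN0 hpos
      rwa [mul_sub, mul_inv_cancel_left₀ hN0.ne'] at h
    nlinarith [mul_nonneg hgap.le hE0]
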